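/- arXiv:2211.01916 — 2 statements merged into one kernel-verified Lean document; each statement's English description precedes it below -/
import Mathlib

section
/- There is a universal constant C > 0 such that if the data distribution P on ℝ^d has finite second moment M₂ = E_{X∼P}‖X‖² and G_T > 1, then the forward marginal p_T satisfies KL(p_T ‖ γ_d) ≤ C·(d + M₂)·exp(−G_T). -/
open MeasureTheory Real

noncomputable section

namespace DiffusionKL

/-- Euclidean space `ℝ^d`. -/
abbrev Vec (d : ℕ) := EuclideanSpace ℝ (Fin d)

/-- Density of the isotropic Gaussian `N(m, v·I_d)` on `ℝ^d`. -/
def gaussDensity (d : ℕ) (m : Vec d) (v : ℝ) (x : Vec d) : ℝ :=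
  (2 * π * v) ^ (-(d : ℝ) / 2) * Real.exp (-‖x - m‖ ^ 2 / (2 * v))

/-- The isotropic Gaussian measure `N(m, v·I_d)` on `ℝ^d`. -/
def gaussMeasure (d : ℕ) (m : Vec d) (v : ℝ) : Measure (Vec d) :=
  MeasureTheory.volume.withDensity (fun x => ENNReal.ofReal (gaussDensity d m v x))

/-- The standard Gaussian measure `γ_d = N(0, I_d)` on `ℝ^d`. -/
def stdGauss (d : ℕ) : Measure (Vec d) := gaussMeasure d 0 1

/-- Kullback-Leibler divergence `KL(μ ‖ ν) = ∫ log (dμ/dν) dμ`. -/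
def KLdiv {d : ℕ} (μ ν : Measure (Vec d)) : ℝ :=
  ∫ x, Real.log ((μ.rnDeriv ν x).toReal) ∂μ

/-- `G_{t,s} = ∫_t^s g(u)² du`. -/
def Gvar (g : ℝ → ℝ) (t s : ℝ) : ℝ := ∫ u in t..s, (g u) ^ 2

/-- `α_{t,s} = exp(−G_{t,s}/2)`. -/
def alphaF (g : ℝ → ℝ) (t s : ℝ) : ℝ := Real.exp (-(Gvar g t s) / 2)

/-- `σ_t² = 1 − exp(−G_t)`. -/
def sigmaSq (g : ℝ → ℝ) (t : ℝ) : ℝ := 1 - Real.exp (-(Gvar g 0 t))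

/-- The law of the forward marginal `x_t = α_t X₀ + σ_t Z`, `X₀ ∼ P`, `Z ∼ N(0,I_d)` indep. -/
def forwardLaw (d : ℕ) (P : Measure (Vec d)) (g : ℝ → ℝ) (t : ℝ) : Measure (Vec d) :=
  Measure.map (fun q : Vec d × Vec d => alphaF g 0 t • q.1 + Real.sqrt (sigmaSq g t) • q.2)
    (P.prod (stdGauss d))

/-- Explicit density of the forward marginal `p_t` (for `t > 0`). -/
def forwardDensity (d : ℕ) (P : Measure (Vec d)) (g : ℝ → ℝ) (t : ℝ) (x : Vec d) : ℝ :=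
  (2 * π * sigmaSq g t) ^ (-(d : ℝ) / 2) *
    ∫ y, Real.exp (-‖x - alphaF g 0 t • y‖ ^ 2 / (2 * sigmaSq g t)) ∂P

/-- Score function `∇ log p` of a density `p`. -/
def scoreOf {d : ℕ} (p : Vec d → ℝ) (x : Vec d) : Vec d :=
  gradient (fun z => Real.log (p z)) x

/-- Score `∇ log p_t` of the forward marginal at time `t > 0`. -/
def fwdScore (d : ℕ) (P : Measure (Vec d)) (g : ℝ → ℝ) (t : ℝ) : Vec d → Vec d :=
  scoreOf (forwardDensity d P g t)

/-- Underlying measure for the joint forward coupling: `ω = (X₀, Z, Z')`. -/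
def coupleMeasure (d : ℕ) (P : Measure (Vec d)) : Measure (Vec d × Vec d × Vec d) :=
  P.prod ((stdGauss d).prod (stdGauss d))

/-- The forward process at time `t`: `x_t(ω) = α_t X₀ + σ_t Z`. -/
def xt (d : ℕ) (g : ℝ → ℝ) (t : ℝ) (ω : Vec d × Vec d × Vec d) : Vec d :=
  alphaF g 0 t • ω.1 + Real.sqrt (sigmaSq g t) • ω.2.1

/-- The forward process at time `s ≥ t`, coupled with `x_t` by
`x_s = α_{t,s} x_t + √(1−α_{t,s}²) Z'`. -/
def xts (d : ℕ) (g : ℝ → ℝ) (t s : ℝ) (ω : Vec d × Vec d × Vec d) : Vec d :=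
  alphaF g t s • xt d g t ω + Real.sqrt (1 - (alphaF g t s) ^ 2) • ω.2.2

/-- Law of a Markov chain after `n` steps, started at `init`, with transition kernels `κ`. -/
def chainLaw (d : ℕ) (init : Measure (Vec d)) (κ : ℕ → Vec d → Measure (Vec d)) :
    ℕ → Measure (Vec d)
  | 0 => init
  | k + 1 => (chainLaw d init κ k).bind (κ k)

/-- One step of the exponential-integrator sampler:
`ŷ_{k+1} | ŷ_k = a ∼ N(e^{G_{N−k}/2}·a + 2(e^{G_{N−k}/2} − 1)·s(a,t_{N−k}), (e^{G_{N−k}} − 1)·I_d)`. -/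
def EIstep (d N : ℕ) (tp : ℕ → ℝ) (g : ℝ → ℝ) (sc : Vec d → ℝ → Vec d) (k : ℕ) (a : Vec d) :
    Measure (Vec d) :=
  gaussMeasure d
    (Real.exp (Gvar g (tp (N - k - 1)) (tp (N - k)) / 2) • a +
      (2 * (Real.exp (Gvar g (tp (N - k - 1)) (tp (N - k)) / 2) - 1)) • sc a (tp (N - k)))
    (Real.exp (Gvar g (tp (N - k - 1)) (tp (N - k))) - 1)

/-- One step of the Euler–Maruyama sampler:
`ŷ_{k+1} | ŷ_k = a ∼ N((1 + G_{N−k}/2)·a + G_{N−k}·s(a,t_{N−k}), G_{N−k}·I_d)`. -/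
def EMstep (d N : ℕ) (tp : ℕ → ℝ) (g : ℝ → ℝ) (sc : Vec d → ℝ → Vec d) (k : ℕ) (a : Vec d) :
    Measure (Vec d) :=
  gaussMeasure d
    ((1 + Gvar g (tp (N - k - 1)) (tp (N - k)) / 2) • a +
      (Gvar g (tp (N - k - 1)) (tp (N - k))) • sc a (tp (N - k)))
    (Gvar g (tp (N - k - 1)) (tp (N - k)))

/-- Terminal law of the exponential-integrator sampler started at `N(0,I_d)`. -/
def EIlaw (d N : ℕ) (tp : ℕ → ℝ) (g : ℝ → ℝ) (sc : Vec d → ℝ → Vec d) : Measure (Vec d) :=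
  chainLaw d (stdGauss d) (EIstep d N tp g sc) N

/-- Terminal law of the Euler–Maruyama sampler started at `N(0,I_d)`. -/
def EMlaw (d N : ℕ) (tp : ℕ → ℝ) (g : ℝ → ℝ) (sc : Vec d → ℝ → Vec d) : Measure (Vec d) :=
  chainLaw d (stdGauss d) (EMstep d N tp g sc) N

/-- The weighted L² score estimation error
`(1/G_T)·Σ_{k=1}^N G_k·E_{p_{t_k}} ‖∇log p_{t_k}(x) − s(x,t_k)‖²`. -/
def scoreErr (d N : ℕ) (P : Measure (Vec d)) (g : ℝ → ℝ) (tp : ℕ → ℝ)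
    (sc : Vec d → ℝ → Vec d) : ℝ :=
  (1 / Gvar g 0 (tp N)) * ∑ k ∈ Finset.range N,
    Gvar g (tp k) (tp (k + 1)) *
      ∫ x, ‖fwdScore d P g (tp (k + 1)) x - sc x (tp (k + 1))‖ ^ 2
        ∂(forwardLaw d P g (tp (k + 1)))

/-- Entry `(i,j)` of the Hessian matrix `∇²f(x)`. -/
def hessEntry {d : ℕ} (f : Vec d → ℝ) (x : Vec d) (i j : Fin d) : ℝ :=
  fderiv ℝ (fun y => fderiv ℝ f y (EuclideanSpace.single j 1)) x (EuclideanSpace.single i 1)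

/-- Frobenius norm of the Hessian matrix `∇²f(x)`. -/
def hessFrob {d : ℕ} (f : Vec d → ℝ) (x : Vec d) : ℝ :=
  Real.sqrt (∑ i, ∑ j, (hessEntry f x i j) ^ 2)

/-- Density of the Gaussian perturbation `X + σZ`, `X ∼ P`, `Z ∼ N(0,I_d)`. -/
def perturbDensity (d : ℕ) (P : Measure (Vec d)) (σ : ℝ) (x : Vec d) : ℝ :=
  (2 * π * σ ^ 2) ^ (-(d : ℝ) / 2) * ∫ y, Real.exp (-‖x - y‖ ^ 2 / (2 * σ ^ 2)) ∂P

/-- Density of `μY + σZ`, `Y ∼ P`, `Z ∼ N(0,I_d)`. -/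
def perturbDensity' (d : ℕ) (P : Measure (Vec d)) (μ σ : ℝ) (x : Vec d) : ℝ :=
  (2 * π * σ ^ 2) ^ (-(d : ℝ) / 2) * ∫ y, Real.exp (-‖x - μ • y‖ ^ 2 / (2 * σ ^ 2)) ∂P

/-- Law of the Gaussian perturbation `X + σZ`. -/
def perturbLaw (d : ℕ) (P : Measure (Vec d)) (σ : ℝ) : Measure (Vec d) :=
  Measure.map (fun q : Vec d × Vec d => q.1 + σ • q.2)
    (P.prod (MeasureTheory.volume.withDensity
      (fun x : Vec d => ENNReal.ofReal ((2 * π) ^ (-(d : ℝ) / 2) * Real.exp (-‖x‖ ^ 2 / 2)))))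

/-- The tilted conditional measure `dP̃_{μ,σ}(y|x) ∝ exp(−‖x−μy‖²/(2σ²)) dP(y)`. -/
def tiltMeasure (d : ℕ) (P : Measure (Vec d)) (μ σ : ℝ) (x : Vec d) : Measure (Vec d) :=
  ((P.withDensity (fun y => ENNReal.ofReal (Real.exp (-‖x - μ • y‖ ^ 2 / (2 * σ ^ 2))))) Set.univ)⁻¹ •
    P.withDensity (fun y => ENNReal.ofReal (Real.exp (-‖x - μ • y‖ ^ 2 / (2 * σ ^ 2))))

/-- Sub-exponential (ψ₁-Orlicz) norm of `f` under the measure `μ`. -/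
def psi1Norm {α : Type*} [MeasurableSpace α] (μ : Measure α) (f : α → ℝ) : ℝ :=
  sInf {t : ℝ | 0 < t ∧ ∫ x, Real.exp (|f x| / t) ∂μ ≤ 2}

/-- Sub-Gaussian (ψ₂-Orlicz) norm of `f` under the measure `μ`. -/
def psi2Norm {α : Type*} [MeasurableSpace α] (μ : Measure α) (f : α → ℝ) : ℝ :=
  sInf {t : ℝ | 0 < t ∧ ∫ x, Real.exp ((f x) ^ 2 / t ^ 2) ∂μ ≤ 2}


/-!
Write `x_T = Y + √v Z` with `Y = α_T X₀` and `v = σ_T²`. Adjoining `Y` to `x_T` can only increase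
the divergence (data processing), and conditionally on `Y` the law of `x_T` is `N(Y, v I)`.
Averaging the Gaussian log-likelihood ratio therefore gives
`KL(p_T ‖ γ) ≤ (E‖Y‖² + d (v - 1 - log v)) / 2`. Here `E‖Y‖² = M₂ exp (-G_T)`, and since
`v = 1 - exp (-G_T)` the remaining term is of second order in `exp (-G_T)`.
-/

open ProbabilityTheory InformationTheory

section RelativeDensity

variable {X Y : Type*} {mX : MeasurableSpace X} {mY : MeasurableSpace Y}

lemma llr_withDensity_exp {ν : Measure X} [SigmaFinite ν] {ℓ : X → ℝ} (hℓ : Measurable ℓ) :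
    llr (ν.withDensity fun x ↦ ENNReal.ofReal (exp (ℓ x))) ν
      =ᵐ[ν.withDensity fun x ↦ ENNReal.ofReal (exp (ℓ x))] ℓ := by
  have h_rnDeriv := Measure.rnDeriv_withDensity ν hℓ.exp.ennreal_ofReal
  filter_upwards [(withDensity_absolutelyContinuous ν _).ae_le h_rnDeriv] with x hx
  rw [llr, hx, ENNReal.toReal_ofReal (exp_pos _).le, log_exp]

lemma klDiv_eq_ofReal_integral_of_eq_withDensity_exp {μ ν : Measure X} [IsProbabilityMeasure μ]
    [IsProbabilityMeasure ν] {ℓ : X → ℝ} (hℓ : Measurable ℓ) (hℓμ : Integrable ℓ μ)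
    (hμ : μ = ν.withDensity fun x ↦ ENNReal.ofReal (exp (ℓ x))) :
    klDiv μ ν = ENNReal.ofReal (∫ x, ℓ x ∂μ) := by
  have h_ac : μ ≪ ν := hμ ▸ withDensity_absolutelyContinuous ν _
  have h_llr : llr μ ν =ᵐ[μ] ℓ := by
    rw [hμ]
    exact llr_withDensity_exp hℓ
  rw [klDiv_of_ac_of_integrable h_ac (hℓμ.congr h_llr.symm), integral_congr_ae h_llr]
  simp

lemma map_prodMk_prod_eq_withDensity {P : Measure X} [SFinite P] {ν : Measure Y} [SFinite ν]
    {T : X × Y → Y} (hT : Measurable T) {f : X × Y → ENNReal} (hf : Measurable f)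
    (h_law : ∀ x, ν.map (fun y ↦ T (x, y)) = ν.withDensity fun y ↦ f (x, y)) :
    (P.prod ν).map (fun q ↦ (q.1, T q)) = (P.prod ν).withDensity f := by
  refine Measure.ext_of_lintegral _ fun h hh ↦ ?_
  rw [lintegral_map hh (by fun_prop), lintegral_prod _ (by fun_prop),
    lintegral_withDensity_eq_lintegral_mul _ hf hh, lintegral_prod _ (by fun_prop)]
  refine lintegral_congr fun x ↦ ?_
  calc ∫⁻ y, h (x, T (x, y)) ∂ν
      = ∫⁻ y, h (x, y) ∂ν.map (fun y ↦ T (x, y)) := by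
        rw [lintegral_map (by fun_prop) (by fun_prop)]
    _ = ∫⁻ y, (f * h) (x, y) ∂ν := by
        rw [h_law, lintegral_withDensity_eq_lintegral_mul _ (by fun_prop) (by fun_prop)]
        rfl

lemma klDiv_map_prod_le_ofReal_integral {P : Measure X} [IsProbabilityMeasure P] {ν : Measure Y}
    [IsProbabilityMeasure ν] {T : X × Y → Y} (hT : Measurable T) {ℓ : X × Y → ℝ}
    (hℓ : Measurable ℓ) (hℓT : Integrable (fun q ↦ ℓ (q.1, T q)) (P.prod ν))
    (h_law : ∀ x, ν.map (fun y ↦ T (x, y)) =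
      ν.withDensity fun y ↦ ENNReal.ofReal (exp (ℓ (x, y)))) :
    klDiv ((P.prod ν).map T) ν ≤ ENNReal.ofReal (∫ q, ℓ (q.1, T q) ∂P.prod ν) := by
  have hT' : Measurable fun q : X × Y ↦ (q.1, T q) := by fun_prop
  set joint := (P.prod ν).map fun q ↦ (q.1, T q) with h_joint
  have : IsProbabilityMeasure joint := Measure.isProbabilityMeasure_map hT'.aemeasurable
  have h_snd : joint.map Prod.snd = (P.prod ν).map T := Measure.map_map measurable_snd hT'
  calc klDiv ((P.prod ν).map T) ν
      = klDiv (joint.map Prod.snd) ((P.prod ν).map Prod.snd) := by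
        rw [h_snd, Measure.map_snd_prod, measure_univ, one_smul]
    _ ≤ klDiv joint (P.prod ν) := klDiv_map_le _ _ measurable_snd
    _ = ENNReal.ofReal (∫ q, ℓ q ∂joint) :=
        klDiv_eq_ofReal_integral_of_eq_withDensity_exp hℓ
          ((integrable_map_measure hℓ.aestronglyMeasurable hT'.aemeasurable).2 hℓT)
          (map_prodMk_prod_eq_withDensity hT hℓ.exp.ennreal_ofReal h_law)
    _ = ENNReal.ofReal (∫ q, ℓ (q.1, T q) ∂P.prod ν) := by
        rw [h_joint, integral_map hT'.aemeasurable hℓ.aestronglyMeasurable]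

end RelativeDensity

section SecondMoment

variable {E : Type*} [NormedAddCommGroup E] [InnerProductSpace ℝ E] [MeasurableSpace E]

lemma memLp_add_smul_prod [SecondCountableTopology E] {P ν : Measure E} [IsFiniteMeasure P]
    [IsFiniteMeasure ν] (hP : MemLp id 2 P) (hν : MemLp id 2 ν) (c : ℝ) :
    MemLp (fun q : E × E ↦ q.1 + c • q.2) 2 (P.prod ν) :=
  (hP.comp_fst ν).add ((hν.comp_snd P).const_smul c)

lemma integral_norm_add_smul_sq [CompleteSpace E] {ν : Measure E} [IsProbabilityMeasure ν]
    (hν : MemLp id 2 ν) (hν0 : ∫ z, z ∂ν = 0) (x : E) (c : ℝ) :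
    ∫ z, ‖x + c • z‖ ^ 2 ∂ν = ‖x‖ ^ 2 + c ^ 2 * ∫ z, ‖z‖ ^ 2 ∂ν := by
  have h_id : Integrable (fun z ↦ z) ν := hν.integrable one_le_two
  have h_inner : Integrable (fun z ↦ 2 * c * inner ℝ x z) ν :=
    (h_id.const_inner x).const_mul (2 * c)
  have h_affine : Integrable (fun z ↦ ‖x‖ ^ 2 + 2 * c * inner ℝ x z) ν :=
    (integrable_const _).add h_inner
  have h_sq : Integrable (fun z ↦ c ^ 2 * ‖z‖ ^ 2) ν :=
    (hν.integrable_norm_pow two_ne_zero).const_mul (c ^ 2)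
  have h_expand (z : E) :
      ‖x + c • z‖ ^ 2 = ‖x‖ ^ 2 + 2 * c * inner ℝ x z + c ^ 2 * ‖z‖ ^ 2 := by
    rw [norm_add_sq_real, inner_smul_right, norm_smul, mul_pow, norm_eq_abs, sq_abs]
    ring
  simp_rw [h_expand]
  rw [integral_add h_affine h_sq,
    integral_add (integrable_const _) h_inner, integral_const_mul, integral_const_mul,
    integral_inner h_id, hν0]
  simp

lemma integral_norm_add_smul_sq_prod [CompleteSpace E] [SecondCountableTopology E]
    {P ν : Measure E} [IsProbabilityMeasure P] [IsProbabilityMeasure ν]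
    (hP : MemLp id 2 P) (hν : MemLp id 2 ν) (hν0 : ∫ z, z ∂ν = 0) (c : ℝ) :
    ∫ q : E × E, ‖q.1 + c • q.2‖ ^ 2 ∂P.prod ν
      = ∫ x, ‖x‖ ^ 2 ∂P + c ^ 2 * ∫ z, ‖z‖ ^ 2 ∂ν := by
  have hP_sq : Integrable (fun x ↦ ‖x‖ ^ 2) P := hP.integrable_norm_pow two_ne_zero
  rw [integral_prod _ ((memLp_add_smul_prod hP hν c).integrable_norm_pow two_ne_zero)]
  simp_rw [integral_norm_add_smul_sq hν hν0]
  rw [integral_add hP_sq (integrable_const _)]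
  simp

variable [BorelSpace E] [FiniteDimensional ℝ E]

lemma integral_inner_sq_stdGaussian (x : E) :
    ∫ z, inner ℝ x z ^ 2 ∂stdGaussian E = ‖x‖ ^ 2 := by
  have h := covarianceBilin_apply (μ := stdGaussian E) IsGaussian.memLp_two_id x x
  simp only [covarianceBilin_stdGaussian, id_eq, integral_id_stdGaussian, sub_zero, ← sq] at h
  rw [← h, innerSL_apply_apply, real_inner_self_eq_norm_sq]

lemma integral_norm_sq_stdGaussian :
    ∫ z, ‖z‖ ^ 2 ∂stdGaussian E = Module.finrank ℝ E := by
  let b := stdOrthonormalBasis ℝ E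
  have h_int (i) : Integrable (fun z ↦ inner ℝ (b i) z ^ 2) (stdGaussian E) :=
    (IsGaussian.memLp_two_id.const_inner (b i)).integrable_sq
  simp_rw [← b.sum_sq_inner_right]
  rw [integral_finsetSum _ fun i _ ↦ h_int i]
  simp [integral_inner_sq_stdGaussian]

end SecondMoment

section GaussianDensity

variable {E : Type*} [NormedAddCommGroup E] [InnerProductSpace ℝ E]

/-- The density of the isotropic Gaussian `N(m, v • id)` on a Euclidean space `E` with respect to
its volume; `gaussDensity` is the case `E = ℝ^d`. -/
def isotropicGaussianPDF (m : E) (v : ℝ) (x : E) : ℝ :=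
  (2 * π * v) ^ (-(Module.finrank ℝ E : ℝ) / 2) * exp (-‖x - m‖ ^ 2 / (2 * v))

lemma continuous_isotropicGaussianPDF (m : E) (v : ℝ) : Continuous (isotropicGaussianPDF m v) := by
  unfold isotropicGaussianPDF
  fun_prop

lemma isotropicGaussianPDF_nonneg (m : E) {v : ℝ} (hv : 0 ≤ v) (x : E) :
    0 ≤ isotropicGaussianPDF m v x := by
  unfold isotropicGaussianPDF
  positivity

/-- The logarithm of the density of `N(m, v • id)` relative to `N(0, id)`. -/
def gaussianLogRatio (m : E) (v : ℝ) (y : E) : ℝ :=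
  ‖y‖ ^ 2 / 2 - ‖y - m‖ ^ 2 / (2 * v) - Module.finrank ℝ E / 2 * log v

lemma isotropicGaussianPDF_mul_exp_gaussianLogRatio (m : E) {v : ℝ} (hv : 0 < v) (y : E) :
    isotropicGaussianPDF 0 1 y * exp (gaussianLogRatio m v y) = isotropicGaussianPDF m v y := by
  have h_vol : exp (-(Module.finrank ℝ E / 2 * log v)) = v ^ (-(Module.finrank ℝ E : ℝ) / 2) := by
    rw [rpow_def_of_pos hv]
    congr 1
    ring
  have h_exp : exp (gaussianLogRatio m v y) =
      exp (‖y‖ ^ 2 / 2) * exp (-‖y - m‖ ^ 2 / (2 * v)) * v ^ (-(Module.finrank ℝ E : ℝ) / 2) := by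
    rw [← h_vol, ← exp_add, ← exp_add, gaussianLogRatio]
    ring_nf
  have h_cancel : exp (-‖y‖ ^ 2 / 2) * exp (‖y‖ ^ 2 / 2) = 1 := by
    rw [← exp_add, neg_div, neg_add_cancel, exp_zero]
  simp only [isotropicGaussianPDF, h_exp, mul_one, sub_zero]
  rw [mul_rpow (by positivity) hv.le]
  linear_combination (2 * π) ^ (-(Module.finrank ℝ E : ℝ) / 2) * exp (-‖y - m‖ ^ 2 / (2 * v)) *
    v ^ (-(Module.finrank ℝ E : ℝ) / 2) * h_cancel

lemma gaussianLogRatio_add_smul (x z : E) {v : ℝ} (hv : 0 < v) :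
    gaussianLogRatio x v (x + √v • z) =
      ‖x + √v • z‖ ^ 2 / 2 - ‖z‖ ^ 2 / 2 - Module.finrank ℝ E / 2 * log v := by
  rw [gaussianLogRatio, add_sub_cancel_left, norm_smul, mul_pow, norm_of_nonneg (sqrt_nonneg v),
    sq_sqrt hv.le, mul_comm 2 v, mul_div_mul_left _ _ hv.ne']

/-- Normalization of the Gaussian density, with the mass in the form in which
`GaussianFourier.integral_cexp_neg_mul_sq_norm_add` produces it. -/
lemma rpow_neg_half_mul_cpow_half_eq_one (n : ℕ) {v : ℝ} (hv : 0 < v) :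
    (((2 * π * v) ^ (-(n : ℝ) / 2) : ℝ) : ℂ) * (π / ((2 * v)⁻¹ : ℝ)) ^ (n / 2 : ℂ) = 1 := by
  have h_base : (π : ℂ) / ((2 * v)⁻¹ : ℝ) = ((2 * π * v : ℝ) : ℂ) := by
    push_cast
    field_simp
  have h_exponent : (n / 2 : ℂ) = ((n / 2 : ℝ) : ℂ) := by
    push_cast
    rfl
  rw [h_base, h_exponent, ← Complex.ofReal_cpow (by positivity), ← Complex.ofReal_mul,
    ← rpow_add (by positivity), neg_div, neg_add_cancel, rpow_zero, Complex.ofReal_one]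

variable [FiniteDimensional ℝ E] [MeasurableSpace E] [BorelSpace E]

lemma integral_isotropicGaussianPDF_mul_cexp (m : E) {v : ℝ} (hv : 0 < v) (t : E) :
    ∫ x, isotropicGaussianPDF m v x * Complex.exp (inner ℝ x t * Complex.I) =
      Complex.exp (-(v * ‖t‖ ^ 2) / 2) * Complex.exp (inner ℝ m t * Complex.I) := by
  let c : ℝ := (2 * π * v) ^ (-(Module.finrank ℝ E : ℝ) / 2)
  let b : ℂ := ((2 * v)⁻¹ : ℝ)
  have hb : 0 < b.re := by
    rw [Complex.ofReal_re]
    positivity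
  have h_shift (x : E) :
      isotropicGaussianPDF m v x * Complex.exp (inner ℝ x t * Complex.I) =
        c * Complex.exp (inner ℝ m t * Complex.I) *
          Complex.exp (-b * ‖x - m‖ ^ 2 + Complex.I * inner ℝ t (x - m)) := by
    change ((c * exp _ : ℝ) : ℂ) * _ = _
    rw [Complex.ofReal_mul, Complex.ofReal_exp, mul_assoc (c : ℂ), mul_assoc (c : ℂ),
      ← Complex.exp_add, ← Complex.exp_add, inner_sub_right, real_inner_comm t x,
      real_inner_comm t m]
    congr 2
    simp only [b]
    push_cast
    field_simp
    ring
  have h_exp : Complex.I ^ 2 * ‖t‖ ^ 2 / (4 * b) = -(v * ‖t‖ ^ 2) / 2 := by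
    simp only [b, Complex.I_sq]
    push_cast
    field_simp
    ring
  simp_rw [h_shift]
  rw [integral_const_mul, integral_sub_right_eq_self
      (fun y : E ↦ Complex.exp (-b * ‖y‖ ^ 2 + Complex.I * inner ℝ t y)) m,
    GaussianFourier.integral_cexp_neg_mul_sq_norm_add hb, h_exp]
  linear_combination Complex.exp (-(v * ‖t‖ ^ 2) / 2) * Complex.exp (inner ℝ m t * Complex.I) *
    rpow_neg_half_mul_cpow_half_eq_one (Module.finrank ℝ E) hv

lemma integrable_isotropicGaussianPDF (m : E) {v : ℝ} (hv : 0 < v) :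
    Integrable (isotropicGaussianPDF m v) := by
  have h_mass := integral_isotropicGaussianPDF_mul_cexp m hv 0
  simp only [inner_zero_right, Complex.ofReal_zero, zero_mul, Complex.exp_zero, mul_one, norm_zero,
    ne_eq, OfNat.ofNat_ne_zero, not_false_eq_true, zero_pow, mul_zero, neg_zero, zero_div,
    integral_complex_ofReal] at h_mass
  refine .of_integral_ne_zero ?_
  exact_mod_cast h_mass.trans_ne one_ne_zero

lemma map_add_smul_stdGaussian_eq_withDensity (m : E) {v : ℝ} (hv : 0 < v) :
    (stdGaussian E).map (fun z ↦ m + √v • z) =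
      volume.withDensity fun x ↦ ENNReal.ofReal (isotropicGaussianPDF m v x) := by
  have h_meas := (continuous_isotropicGaussianPDF m v).measurable
  have := isFiniteMeasure_withDensity_ofReal (integrable_isotropicGaussianPDF m hv).2
  refine Measure.ext_of_charFun (funext fun t ↦ ?_)
  have h_affine : (stdGaussian E).map (fun z ↦ m + √v • z) =
      ((stdGaussian E).map (√v • ·)).map (m + ·) :=
    (Measure.map_map (by fun_prop) (by fun_prop)).symm
  calc charFun ((stdGaussian E).map fun z ↦ m + √v • z) t
      = Complex.exp (-(v * ‖t‖ ^ 2) / 2) * Complex.exp (inner ℝ m t * Complex.I) := by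
        rw [h_affine, charFun_map_const_add, charFun_map_smul, charFun_stdGaussian, norm_smul,
          norm_of_nonneg (sqrt_nonneg v), Complex.ofReal_mul, mul_pow, ← Complex.ofReal_pow (√v),
          sq_sqrt hv.le]
    _ = ∫ x, isotropicGaussianPDF m v x * Complex.exp (inner ℝ x t * Complex.I) :=
        (integral_isotropicGaussianPDF_mul_cexp m hv t).symm
    _ = _ := by
        rw [charFun_apply, integral_withDensity_eq_integral_toReal_smul h_meas.ennreal_ofReal
          (.of_forall fun _ ↦ ENNReal.ofReal_lt_top)]
        simp_rw [ENNReal.toReal_ofReal (isotropicGaussianPDF_nonneg m hv.le _), Complex.real_smul]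

lemma stdGaussian_eq_withDensity :
    stdGaussian E =
      volume.withDensity fun x ↦ ENNReal.ofReal (isotropicGaussianPDF (0 : E) 1 x) := by
  simpa using map_add_smul_stdGaussian_eq_withDensity (0 : E) one_pos

lemma map_add_smul_stdGaussian_eq_withDensity_exp (m : E) {v : ℝ} (hv : 0 < v) :
    (stdGaussian E).map (fun z ↦ m + √v • z) =
      (stdGaussian E).withDensity fun y ↦ ENNReal.ofReal (exp (gaussianLogRatio m v y)) := by
  have h_pdf := (continuous_isotropicGaussianPDF (0 : E) 1).measurable.ennreal_ofReal
  have h_ratio : Measurable fun y ↦ ENNReal.ofReal (exp (gaussianLogRatio m v y)) := by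
    unfold gaussianLogRatio
    fun_prop
  rw [map_add_smul_stdGaussian_eq_withDensity m hv, stdGaussian_eq_withDensity,
    ← withDensity_mul _ h_pdf h_ratio]
  congr with y
  rw [Pi.mul_apply, ← ENNReal.ofReal_mul (isotropicGaussianPDF_nonneg 0 zero_le_one y),
    isotropicGaussianPDF_mul_exp_gaussianLogRatio m hv]

theorem klDiv_map_add_smul_stdGaussian_le {P : Measure E} [IsProbabilityMeasure P]
    (hP : MemLp id 2 P) {v : ℝ} (hv : 0 < v) :
    klDiv ((P.prod (stdGaussian E)).map fun q ↦ q.1 + √v • q.2) (stdGaussian E) ≤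
      ENNReal.ofReal ((∫ x, ‖x‖ ^ 2 ∂P + Module.finrank ℝ E * (v - 1 - log v)) / 2) := by
  have hZ : MemLp id 2 (stdGaussian E) := IsGaussian.memLp_two_id
  have h_int_add : Integrable (fun q : E × E ↦ ‖q.1 + √v • q.2‖ ^ 2 / 2) (P.prod (stdGaussian E)) :=
    ((memLp_add_smul_prod hP hZ (√v)).integrable_norm_pow two_ne_zero).div_const 2
  have h_int_snd : Integrable (fun q : E × E ↦ ‖q.2‖ ^ 2 / 2) (P.prod (stdGaussian E)) :=
    ((hZ.integrable_norm_pow two_ne_zero).comp_snd P).div_const 2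
  have h_int_diff : Integrable (fun q : E × E ↦ ‖q.1 + √v • q.2‖ ^ 2 / 2 - ‖q.2‖ ^ 2 / 2)
      (P.prod (stdGaussian E)) := h_int_add.sub h_int_snd
  have h_int : Integrable (fun q : E × E ↦ gaussianLogRatio q.1 v (q.1 + √v • q.2))
      (P.prod (stdGaussian E)) := by
    simp_rw [gaussianLogRatio_add_smul _ _ hv]
    exact h_int_diff.sub (integrable_const _)
  have h_mean : ∫ q : E × E, gaussianLogRatio q.1 v (q.1 + √v • q.2) ∂P.prod (stdGaussian E) =
      (∫ x, ‖x‖ ^ 2 ∂P + Module.finrank ℝ E * (v - 1 - log v)) / 2 := by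
    simp_rw [gaussianLogRatio_add_smul _ _ hv]
    rw [integral_sub h_int_diff (integrable_const _),
      integral_sub h_int_add h_int_snd, integral_div, integral_div,
      integral_norm_add_smul_sq_prod hP hZ integral_id_stdGaussian, sq_sqrt hv.le,
      integral_fun_snd fun z : E ↦ ‖z‖ ^ 2, integral_norm_sq_stdGaussian, integral_const]
    simp only [probReal_univ, smul_eq_mul, one_mul]
    ring
  rw [← h_mean]
  refine klDiv_map_prod_le_ofReal_integral (by fun_prop)
    (ℓ := fun q ↦ gaussianLogRatio q.1 v q.2) ?_ h_int
    fun x ↦ map_add_smul_stdGaussian_eq_withDensity_exp x hv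
  unfold gaussianLogRatio
  fun_prop

end GaussianDensity

section ForwardProcess

variable {d : ℕ}

lemma stdGauss_eq_stdGaussian (d : ℕ) : stdGauss d = stdGaussian (Vec d) := by
  rw [stdGaussian_eq_withDensity, stdGauss, gaussMeasure]
  simp only [gaussDensity, isotropicGaussianPDF, finrank_euclideanSpace_fin]

lemma KLdiv_le_of_klDiv_le_ofReal {μ ν : Measure (Vec d)} [IsProbabilityMeasure μ]
    [IsProbabilityMeasure ν] {c : ℝ} (hc : 0 ≤ c) (h : klDiv μ ν ≤ ENNReal.ofReal c) :
    KLdiv μ ν ≤ c := by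
  have h_ac : μ ≪ ν := (klDiv_ne_top_iff.1 (ne_top_of_le_ne_top ENNReal.ofReal_ne_top h)).1
  calc KLdiv μ ν = (klDiv μ ν).toReal := (toReal_klDiv_of_measure_eq h_ac (by simp)).symm
    _ ≤ c := ENNReal.toReal_le_of_le_ofReal hc h

lemma forwardLaw_eq_map_add_smul (P : Measure (Vec d)) [SFinite P] (g : ℝ → ℝ) (t : ℝ) :
    forwardLaw d P g t = ((P.map (alphaF g 0 t • ·)).prod (stdGaussian (Vec d))).map
      fun q ↦ q.1 + √(sigmaSq g t) • q.2 := by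
  have h_prod := Measure.map_prod_map P (stdGaussian (Vec d))
    (measurable_const_smul (alphaF g 0 t)) measurable_id
  rw [Measure.map_id] at h_prod
  rw [h_prod, Measure.map_map (by fun_prop) (by fun_prop), forwardLaw, stdGauss_eq_stdGaussian]
  rfl

lemma alphaF_sq (g : ℝ → ℝ) (t s : ℝ) : alphaF g t s ^ 2 = exp (-Gvar g t s) := by
  rw [alphaF, ← exp_nat_mul]
  congr 1
  push_cast
  ring

lemma neg_log_one_sub_exp_neg_le {G : ℝ} (hG : 0 < G) :
    -log (1 - exp (-G)) - exp (-G) ≤ exp (-G) / (exp G - 1) := by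
  have h_pos : 0 < exp G - 1 := sub_pos.2 (one_lt_exp_iff.2 hG)
  have h_inv : (1 - exp (-G))⁻¹ = exp G / (exp G - 1) := by
    rw [exp_neg]
    field_simp
  have h_log := one_sub_inv_le_log_of_pos (sub_pos.2 (exp_lt_one_iff.2 (neg_lt_zero.2 hG)))
  rw [h_inv] at h_log
  have h_id : exp G / (exp G - 1) - 1 - exp (-G) = exp (-G) / (exp G - 1) := by
    rw [exp_neg]
    field_simp
    ring
  linarith

theorem klDiv_forwardLaw_le {P : Measure (Vec d)} [IsProbabilityMeasure P] (hP : MemLp id 2 P)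
    {g : ℝ → ℝ} {t : ℝ} (hG : 0 < Gvar g 0 t) :
    klDiv (forwardLaw d P g t) (stdGaussian (Vec d)) ≤ ENNReal.ofReal
      ((d / (exp (Gvar g 0 t) - 1) + ∫ x, ‖x‖ ^ 2 ∂P) / 2 * exp (-Gvar g 0 t)) := by
  have h_smul : Measurable fun x : Vec d ↦ alphaF g 0 t • x := by fun_prop
  have : IsProbabilityMeasure (P.map (alphaF g 0 t • ·)) :=
    Measure.isProbabilityMeasure_map h_smul.aemeasurable
  have h_memLp : MemLp id 2 (P.map (alphaF g 0 t • ·)) :=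
    (memLp_map_measure_iff (by fun_prop) h_smul.aemeasurable).2 (hP.const_smul (alphaF g 0 t))
  have h_moment : ∫ x, ‖x‖ ^ 2 ∂P.map (alphaF g 0 t • ·) =
      exp (-Gvar g 0 t) * ∫ x, ‖x‖ ^ 2 ∂P := by
    rw [integral_map h_smul.aemeasurable (by fun_prop), ← alphaF_sq, ← integral_const_mul]
    simp_rw [norm_smul, mul_pow, norm_eq_abs, sq_abs]
  have h_var : 0 < sigmaSq g t := sub_pos.2 (exp_lt_one_iff.2 (neg_lt_zero.2 hG))
  rw [forwardLaw_eq_map_add_smul]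
  refine (klDiv_map_add_smul_stdGaussian_le h_memLp h_var).trans (ENNReal.ofReal_le_ofReal ?_)
  rw [h_moment, finrank_euclideanSpace_fin]
  have h_dim : d * (sigmaSq g t - 1 - log (sigmaSq g t)) ≤
      d * (exp (-Gvar g 0 t) / (exp (Gvar g 0 t) - 1)) := by
    gcongr
    rw [sigmaSq]
    linarith [neg_log_one_sub_exp_neg_le hG]
  calc _ ≤ (exp (-Gvar g 0 t) * ∫ x, ‖x‖ ^ 2 ∂P +
        d * (exp (-Gvar g 0 t) / (exp (Gvar g 0 t) - 1))) / 2 := by gcongr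
    _ = _ := by ring

theorem statement5_general {d : ℕ} {T : ℝ} {P : Measure (Vec d)} {g : ℝ → ℝ}
    [IsProbabilityMeasure P] (hP : Integrable (fun x ↦ ‖x‖ ^ 2) P) (hG : 0 < Gvar g 0 T) :
    KLdiv (forwardLaw d P g T) (stdGauss d) ≤
      (d / (exp (Gvar g 0 T) - 1) + ∫ x, ‖x‖ ^ 2 ∂P) / 2 * exp (-Gvar g 0 T) := by
  have : IsProbabilityMeasure (forwardLaw d P g T) := by
    rw [forwardLaw, stdGauss_eq_stdGaussian]
    exact Measure.isProbabilityMeasure_map (by fun_prop)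
  have h_memLp : MemLp id 2 P := (memLp_two_iff_integrable_sq_norm aestronglyMeasurable_id).2 hP
  have h_exp : 0 ≤ exp (Gvar g 0 T) - 1 := sub_nonneg.2 (one_le_exp hG.le)
  rw [stdGauss_eq_stdGaussian]
  exact KLdiv_le_of_klDiv_le_ofReal (by positivity) (klDiv_forwardLaw_le h_memLp hG)

end ForwardProcess

/-- Lemma `converge-forward`: exponential convergence of the forward
process to the standard Gaussian. -/
theorem statement5 :
    ∃ C : ℝ, 0 < C ∧
      ∀ (d : ℕ) (T : ℝ) (P : Measure (Vec d)) (g : ℝ → ℝ),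
        IsProbabilityMeasure P →
        ContinuousOn g (Set.Icc 0 T) → (∀ t ∈ Set.Ioc (0 : ℝ) T, 0 < g t) →
        0 < T →
        Integrable (fun x => ‖x‖ ^ 2) P →
        1 < Gvar g 0 T →
        KLdiv (forwardLaw d P g T) (stdGauss d) ≤
          C * ((d : ℝ) + ∫ x, ‖x‖ ^ 2 ∂P) * Real.exp (-Gvar g 0 T) := by
  refine ⟨1, one_pos, fun d T P g _ _ _ _ hP hG ↦ ?_⟩
  have h_exp : 1 ≤ exp (Gvar g 0 T) - 1 := by linarith [add_one_le_exp (Gvar g 0 T)]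
  have h_dim : (d : ℝ) / (exp (Gvar g 0 T) - 1) ≤ d := div_le_self d.cast_nonneg h_exp
  have h_moment : 0 ≤ ∫ x, ‖x‖ ^ 2 ∂P := integral_nonneg fun x ↦ sq_nonneg ‖x‖
  refine (statement5_general hP (one_pos.trans hG)).trans ?_
  gcongr
  linarith [(d.cast_nonneg : (0 : ℝ) ≤ d)]

end DiffusionKL
end
end

section
/- There is a universal constant C > 0 such that the following holds. Let P be a probability measure on ℝ^d, σ > 0, and let p_σ be the density of the Gaussian perturbation of P with variance σ². Then for every integer p ≥ 1, E_{X∼p_σ}‖∇²log p_σ(X)‖_F^p ≤ (C·p·d/σ²)^p; equivalently, the sub-exponential (ψ₁-Orlicz) norm of the random variable ‖∇²log p_σ(X)‖_F is at most C·d/σ². -/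
open MeasureTheory Real

noncomputable section

namespace DiffusionKL

/-
The second-order Tweedie formula reads `∇² log p_σ(x) = Cov(X | X + σZ = x) / σ⁴ - I / σ²`. A
positive semidefinite matrix has Frobenius norm at most its trace, and the trace of the posterior
covariance is at most the posterior mean of `‖x - X‖²`, so
`‖∇² log p_σ(x)‖_F ≤ √d / σ² + E[‖x - X‖² | X + σZ = x] / σ⁴`.
Dividing by `4d / σ²` and exponentiating, Jensen's inequality moves the exponential inside the
posterior mean. Integrating over `x ∼ p_σ` then only involves the residual `X + σZ - X = σZ`, whose
Gaussian exponential moment is explicit: the total is at most `e^(1/4) (1 - 1/(2d))^(-d/2) ≤ 2`.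
The moment bounds follow by comparing `t ^ p / p!` with `exp t`.
-/

open ProbabilityTheory
open scoped RealInnerProductSpace

section Orlicz

variable {α : Type*} [MeasurableSpace α] {μ : Measure α} {f : α → ℝ} {t : ℝ}

lemma psi1Norm_le_of_integral_exp_le (ht : 0 < t) (h : ∫ x, exp (|f x| / t) ∂μ ≤ 2) :
    psi1Norm μ f ≤ t :=
  csInf_le ⟨0, fun _ hs => hs.1.le⟩ ⟨ht, h⟩

lemma psi1Norm_zero [IsProbabilityMeasure μ] : psi1Norm μ (0 : α → ℝ) = 0 := by
  refine le_antisymm (le_of_forall_pos_le_add fun t ht => ?_) (Real.sInf_nonneg fun _ hs => hs.1.le)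
  rw [zero_add]
  exact psi1Norm_le_of_integral_exp_le ht (by simp)

lemma integral_abs_pow_le_factorial_mul_integral_exp (ht : 0 < t)
    (hf : Integrable (fun x => exp (|f x| / t)) μ) (p : ℕ) :
    ∫ x, |f x| ^ p ∂μ ≤ p.factorial * t ^ p * ∫ x, exp (|f x| / t) ∂μ := by
  rw [← integral_const_mul]
  refine integral_mono_of_nonneg (.of_forall fun x => by positivity) (hf.const_mul _)
    (.of_forall fun x => ?_)
  have h := pow_div_factorial_le_exp (|f x| / t) (by positivity) p
  rw [div_le_iff₀ (by positivity), div_pow, div_le_iff₀ (by positivity)] at h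
  linarith

lemma integral_abs_pow_le_of_integral_exp_le_two (ht : 0 < t)
    (hf : Integrable (fun x => exp (|f x| / t)) μ) (h : ∫ x, exp (|f x| / t) ∂μ ≤ 2)
    {p : ℕ} (hp : 1 ≤ p) : ∫ x, |f x| ^ p ∂μ ≤ (2 * p * t) ^ p :=
  calc ∫ x, |f x| ^ p ∂μ
      ≤ p.factorial * t ^ p * ∫ x, exp (|f x| / t) ∂μ :=
        integral_abs_pow_le_factorial_mul_integral_exp ht hf p
    _ ≤ (p : ℝ) ^ p * t ^ p * 2 ^ p := by
        gcongr
        · exact_mod_cast p.factorial_le_pow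
        · exact h.trans (le_self_pow₀ one_le_two (by omega))
    _ = (2 * p * t) ^ p := by rw [mul_pow, mul_pow]; ring

end Orlicz

lemma ofReal_exp_integral_le_lintegral {α : Type*} [MeasurableSpace α] {μ : Measure α}
    [IsProbabilityMeasure μ] {X : α → ℝ} (hX : Integrable X μ) :
    ENNReal.ofReal (exp (∫ a, X a ∂μ)) ≤ ∫⁻ a, ENNReal.ofReal (exp (X a)) ∂μ := by
  have hm : AEStronglyMeasurable (fun a => exp (X a)) μ :=
    continuous_exp.comp_aestronglyMeasurable hX.1
  by_cases h : Integrable (fun a => exp (X a)) μ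
  · rw [← ofReal_integral_eq_lintegral_ofReal h (.of_forall fun a => (exp_pos _).le)]
    exact ENNReal.ofReal_le_ofReal (convexOn_exp.map_integral_le continuousOn_exp isClosed_univ
      (.of_forall fun a => Set.mem_univ _) hX h)
  · rw [← lintegral_ofReal_ne_top_iff_integrable hm (.of_forall fun a => (exp_pos _).le),
      not_not] at h
    exact h ▸ le_top

section Matrix

open scoped Matrix.Norms.Frobenius

lemma frobenius_norm_le_trace {n : Type*} [Fintype n] {A : Matrix n n ℝ}
    (hA : A.PosSemidef) : ‖A‖ ≤ A.trace := by
  rw [Matrix.frobenius_norm_def, ← sqrt_eq_rpow]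
  refine sqrt_le_iff.2 ⟨hA.trace_nonneg, ?_⟩
  calc ∑ i, ∑ j, ‖A i j‖ ^ (2 : ℝ) ≤ ∑ i, ∑ j, A i i * A j j := by
        gcongr with i _ j _
        have h := (hA.submatrix ![i, j]).det_nonneg
        have hji : A j i = A i j := by simpa using hA.isHermitian.apply i j
        simp only [Matrix.det_fin_two, Matrix.submatrix_apply, Matrix.cons_val_zero,
          Matrix.cons_val_one, hji] at h
        rw [rpow_two, norm_eq_abs, sq_abs]
        linarith
    _ = A.trace ^ 2 := by rw [sq, Matrix.trace, Finset.sum_mul_sum]; rfl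

end Matrix

lemma hasFDerivAt_integral_comp_sub {E G : Type*} [NormedAddCommGroup E] [NormedSpace ℝ E]
    [MeasurableSpace E] [OpensMeasurableSpace E] [SecondCountableTopology E]
    [NormedAddCommGroup G] [NormedSpace ℝ G] {P : Measure E} [IsFiniteMeasure P]
    {φ : E → G} {φ' : E → E →L[ℝ] G} (hφ : ∀ w, HasFDerivAt φ (φ' w) w) (hφ'c : Continuous φ')
    {M M' : ℝ} (hM : ∀ w, ‖φ w‖ ≤ M) (hM' : ∀ w, ‖φ' w‖ ≤ M') (x : E) :
    HasFDerivAt (fun x => ∫ y, φ (x - y) ∂P) (∫ y, φ' (x - y) ∂P) x := by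
  have hφc : Continuous φ := continuous_iff_continuousAt.2 fun w => (hφ w).continuousAt
  have hsub (x : E) : Continuous fun y : E => x - y := by fun_prop
  refine hasFDerivAt_integral_of_dominated_of_fderiv_le (s := Set.univ) (bound := fun _ => M')
    (F := fun x y => φ (x - y)) (F' := fun x y => φ' (x - y)) Filter.univ_mem
    (.of_forall fun x => (hφc.comp (hsub x)).aestronglyMeasurable)
    (.of_bound (hφc.comp (hsub x)).aestronglyMeasurable M (.of_forall fun y => hM _))
    (hφ'c.comp (hsub x)).aestronglyMeasurable (.of_forall fun y z _ => hM' _)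
    (integrable_const _) (.of_forall fun y z _ => ?_)
  simpa [Function.comp_def] using (hφ (z - y)).comp z ((hasFDerivAt_id z).sub_const y)

section GaussianSmoothing

variable {E : Type*} [NormedAddCommGroup E] {v : ℝ}

/-- The unnormalised centred Gaussian density of variance `v`. The normalising constant is left
out because it cancels both in posterior expectations and in derivatives of the log-density. -/
def gaussKernel (v : ℝ) (w : E) : ℝ := exp (-‖w‖ ^ 2 / (2 * v))

lemma gaussKernel_pos (v : ℝ) (w : E) : 0 < gaussKernel v w := exp_pos _

lemma continuous_gaussKernel (v : ℝ) : Continuous (gaussKernel v : E → ℝ) := by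
  unfold gaussKernel
  fun_prop

lemma gaussKernel_mul_one_add_norm_sq_le (hv : 0 < v) (w : E) :
    gaussKernel v w * (1 + ‖w‖ ^ 2) ≤ 1 + 2 * v := by
  have hexp : gaussKernel v w * exp (‖w‖ ^ 2 / (2 * v)) = 1 := by
    rw [gaussKernel, neg_div, ← exp_add, neg_add_cancel, exp_zero]
  have hle : 1 + ‖w‖ ^ 2 ≤ (1 + 2 * v) * exp (‖w‖ ^ 2 / (2 * v)) := by
    have h1 : ‖w‖ ^ 2 / (2 * v) * (2 * v) = ‖w‖ ^ 2 := by field_simp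
    have h2 := add_one_le_exp (‖w‖ ^ 2 / (2 * v))
    have h3 : 0 ≤ ‖w‖ ^ 2 / (2 * v) := by positivity
    nlinarith
  calc gaussKernel v w * (1 + ‖w‖ ^ 2)
      ≤ gaussKernel v w * ((1 + 2 * v) * exp (‖w‖ ^ 2 / (2 * v))) :=
        mul_le_mul_of_nonneg_left hle (gaussKernel_pos v w).le
    _ = 1 + 2 * v := by rw [mul_left_comm, hexp, mul_one]

lemma norm_gaussKernel_smul_le {G : Type*} [NormedAddCommGroup G] [NormedSpace ℝ G]
    (hv : 0 < v) {F : E → G} {C : ℝ} (hF : ∀ w, ‖F w‖ ≤ C * (1 + ‖w‖ ^ 2)) (w : E) :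
    ‖gaussKernel v w • F w‖ ≤ C * (1 + 2 * v) := by
  have hC : 0 ≤ C := by simpa using (norm_nonneg _).trans (hF 0)
  calc ‖gaussKernel v w • F w‖
      = gaussKernel v w * ‖F w‖ := by rw [norm_smul, norm_of_nonneg (gaussKernel_pos v w).le]
    _ ≤ gaussKernel v w * (C * (1 + ‖w‖ ^ 2)) :=
        mul_le_mul_of_nonneg_left (hF w) (gaussKernel_pos v w).le
    _ = C * (gaussKernel v w * (1 + ‖w‖ ^ 2)) := mul_left_comm _ _ _
    _ ≤ C * (1 + 2 * v) := mul_le_mul_of_nonneg_left (gaussKernel_mul_one_add_norm_sq_le hv w) hC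

section Derivative

variable [InnerProductSpace ℝ E]

lemma hasFDerivAt_gaussKernel (v : ℝ) (w : E) :
    HasFDerivAt (gaussKernel v) (-(gaussKernel v w / v) • innerSL ℝ w) w := by
  have h := ((hasStrictFDerivAt_norm_sq w).hasFDerivAt.const_mul (-(2 * v)⁻¹)).exp
  convert h using 1
  · funext z
    rw [gaussKernel, div_eq_inv_mul, mul_neg, neg_mul]
  · rw [← Nat.cast_smul_eq_nsmul ℝ, smul_smul, smul_smul, gaussKernel, div_eq_inv_mul,
      div_eq_inv_mul, mul_neg, neg_mul]
    congr 1
    push_cast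
    ring

lemma norm_sub_div_smul_innerSL_le (hv : 0 < v) {f : E → ℝ} {f' : E → E →L[ℝ] ℝ} {C : ℝ}
    (hf : ∀ w, ‖f w‖ ≤ C * (1 + ‖w‖)) (hf' : ∀ w, ‖f' w‖ ≤ C) (w : E) :
    ‖f' w - (f w / v) • innerSL ℝ w‖ ≤ C * (1 + 2 / v) * (1 + ‖w‖ ^ 2) := by
  have hC : 0 ≤ C := (norm_nonneg _).trans (hf' 0)
  calc ‖f' w - (f w / v) • innerSL ℝ w‖
      ≤ ‖f' w‖ + ‖f w‖ / v * ‖w‖ := by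
        refine (norm_sub_le _ _).trans_eq ?_
        rw [norm_smul, innerSL_apply_norm, norm_div, norm_of_nonneg hv.le]
    _ ≤ C + C * (1 + ‖w‖) / v * ‖w‖ := by gcongr; exacts [hf' w, hf w]
    _ = C + C / v * (‖w‖ + ‖w‖ ^ 2) := by ring
    _ ≤ C * (1 + ‖w‖ ^ 2) + C / v * (2 * (1 + ‖w‖ ^ 2)) := by
        gcongr
        · nlinarith [mul_nonneg hC (sq_nonneg ‖w‖)]
        · nlinarith [sq_nonneg (‖w‖ - 1)]
    _ = C * (1 + 2 / v) * (1 + ‖w‖ ^ 2) := by ring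

end Derivative

section Posterior

variable [MeasurableSpace E]

/-- The Gaussian smoothing `x ↦ ∫ exp (-‖x - y‖² / (2v)) dP(y)`, i.e. the density of `X + √v Z`
with `X ∼ P` up to its normalising constant. -/
def gaussConv (P : Measure E) (v : ℝ) (x : E) : ℝ := ∫ y, gaussKernel v (x - y) ∂P

/-- The posterior law of the signal `X ∼ P` given the noisy observation `X + √v Z = x`. -/
def gaussPosterior (P : Measure E) (v : ℝ) (x : E) : Measure E :=
  P.tilted fun y => -‖x - y‖ ^ 2 / (2 * v)

variable {P : Measure E}

lemma integral_gaussPosterior {G : Type*} [NormedAddCommGroup G] [NormedSpace ℝ G] (x : E)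
    (f : E → G) :
    ∫ y, f y ∂(gaussPosterior P v x) =
      (gaussConv P v x)⁻¹ • ∫ y, gaussKernel v (x - y) • f y ∂P := by
  rw [gaussPosterior, integral_tilted, ← integral_smul]
  change ∫ y, (gaussKernel v (x - y) / gaussConv P v x) • f y ∂P = _
  simp_rw [smul_smul, div_eq_inv_mul]

variable [BorelSpace E] [SecondCountableTopology E] [IsFiniteMeasure P]

lemma integrable_gaussKernel_smul {G : Type*} [NormedAddCommGroup G]
    [NormedSpace ℝ G] (hv : 0 < v) {F : E → G} (hFc : Continuous F) {C : ℝ}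
    (hF : ∀ w, ‖F w‖ ≤ C * (1 + ‖w‖ ^ 2)) (x : E) :
    Integrable (fun y => gaussKernel v (x - y) • F (x - y)) P := by
  have hcont : Continuous fun y => gaussKernel v (x - y) • F (x - y) :=
    ((continuous_gaussKernel v).smul hFc).comp (by fun_prop : Continuous fun y => x - y)
  exact .of_bound hcont.aestronglyMeasurable _
    (.of_forall fun y => norm_gaussKernel_smul_le hv hF (x - y))

lemma integrable_gaussKernel (hv : 0 < v) (x : E) :
    Integrable (fun y => gaussKernel v (x - y)) P := by
  simpa using integrable_gaussKernel_smul (F := fun _ => (1 : ℝ)) (C := 1) hv continuous_const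
    (fun w => by simp) x

lemma integrable_gaussPosterior {G : Type*} [NormedAddCommGroup G] [NormedSpace ℝ G]
    (hv : 0 < v) {F : E → G} (hFc : Continuous F) {C : ℝ}
    (hF : ∀ w, ‖F w‖ ≤ C * (1 + ‖w‖ ^ 2)) (x : E) :
    Integrable (fun y => F (x - y)) (gaussPosterior P v x) :=
  (integrable_tilted_iff (integrable_gaussKernel hv x) _).2
    (integrable_gaussKernel_smul hv hFc hF x)

lemma memLp_two_gaussPosterior {G : Type*} [NormedAddCommGroup G]
    (hv : 0 < v) {F : E → G} (hFc : Continuous F) {C : ℝ}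
    (hF : ∀ w, ‖F w‖ ≤ C * (1 + ‖w‖)) (x : E) :
    MemLp (fun y => F (x - y)) 2 (gaussPosterior P v x) := by
  have hmeas : AEStronglyMeasurable (fun y => F (x - y)) (gaussPosterior P v x) :=
    (hFc.comp (by fun_prop : Continuous fun y => x - y)).aestronglyMeasurable
  refine (memLp_two_iff_integrable_sq_norm hmeas).2 ?_
  refine integrable_gaussPosterior (F := fun w => ‖F w‖ ^ 2) (C := 2 * C ^ 2) hv (by fun_prop)
    (fun w => ?_) x
  calc ‖‖F w‖ ^ 2‖ = ‖F w‖ ^ 2 := by simp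
    _ ≤ (C * (1 + ‖w‖)) ^ 2 := by gcongr; exact hF w
    _ ≤ 2 * C ^ 2 * (1 + ‖w‖ ^ 2) := by nlinarith [mul_nonneg (sq_nonneg C) (sq_nonneg (1 - ‖w‖))]

lemma memLp_two_id_gaussPosterior (hv : 0 < v) (x : E) : MemLp id 2 (gaussPosterior P v x) := by
  have h := memLp_two_gaussPosterior (P := P) (F := fun w => x - w) (C := 1 + ‖x‖) hv
    (by fun_prop) (fun w => (norm_sub_le x w).trans ?_) x
  · simpa only [sub_sub_cancel, ← Function.id_def] using h
  · nlinarith [norm_nonneg x, norm_nonneg w]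

variable [NeZero P]

lemma gaussConv_pos (hv : 0 < v) (x : E) : 0 < gaussConv P v x :=
  integral_exp_pos (integrable_gaussKernel hv x)

lemma isProbabilityMeasure_gaussPosterior (hv : 0 < v) (x : E) :
    IsProbabilityMeasure (gaussPosterior P v x) :=
  isProbabilityMeasure_tilted (integrable_gaussKernel hv x)

lemma integral_gaussKernel_smul {G : Type*} [NormedAddCommGroup G] [NormedSpace ℝ G]
    (hv : 0 < v) (x : E) (f : E → G) :
    ∫ y, gaussKernel v (x - y) • f y ∂P =
      gaussConv P v x • ∫ y, f y ∂(gaussPosterior P v x) := by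
  rw [integral_gaussPosterior, smul_inv_smul₀ (gaussConv_pos hv x).ne']

end Posterior

section Calculus

variable [InnerProductSpace ℝ E] [MeasurableSpace E] [BorelSpace E] [SecondCountableTopology E]
  {P : Measure E} [IsFiniteMeasure P]

lemma memLp_two_inner_gaussPosterior (hv : 0 < v) (x u : E) :
    MemLp (fun y => ⟪u, x - y⟫) 2 (gaussPosterior P v x) :=
  memLp_two_gaussPosterior (F := fun w => ⟪u, w⟫) (C := ‖u‖) hv (by fun_prop)
    (fun w => (norm_inner_le_norm u w).trans (by gcongr; linarith)) x

lemma integral_innerSL_gaussPosterior_apply (hv : 0 < v) (x u : E) :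
    (∫ y, innerSL ℝ (x - y) ∂(gaussPosterior P v x)) u =
      ∫ y, ⟪u, x - y⟫ ∂(gaussPosterior P v x) := by
  rw [ContinuousLinearMap.integral_apply (integrable_gaussPosterior (F := fun w => innerSL ℝ w)
    (C := 1) hv (by fun_prop) (fun w => ?_) x)]
  · simp only [innerSL_apply_apply, real_inner_comm]
  · rw [innerSL_apply_norm]
    nlinarith [sq_nonneg (‖w‖ - 1)]

variable [NeZero P]

lemma hasFDerivAt_integral_gaussKernel_mul (hv : 0 < v) {f : E → ℝ} {f' : E → E →L[ℝ] ℝ} {C : ℝ}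
    (hff' : ∀ w, HasFDerivAt f (f' w) w) (hf'c : Continuous f')
    (hf : ∀ w, ‖f w‖ ≤ C * (1 + ‖w‖)) (hf' : ∀ w, ‖f' w‖ ≤ C) (x : E) :
    HasFDerivAt (fun x => ∫ y, gaussKernel v (x - y) * f (x - y) ∂P)
      (gaussConv P v x • ∫ y, (f' (x - y) - (f (x - y) / v) • innerSL ℝ (x - y))
        ∂(gaussPosterior P v x)) x := by
  have hC : 0 ≤ C := (norm_nonneg _).trans (hf' 0)
  have hfc : Continuous f := continuous_iff_continuousAt.2 fun w => (hff' w).continuousAt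
  have hderiv (w : E) : HasFDerivAt (fun w => gaussKernel v w * f w)
      (gaussKernel v w • (f' w - (f w / v) • innerSL ℝ w)) w := by
    refine ((hasFDerivAt_gaussKernel v w).mul (hff' w)).congr_fderiv ?_
    rw [smul_sub, smul_smul, smul_smul, sub_eq_add_neg, mul_neg, neg_smul, mul_div_left_comm]
  rw [← integral_gaussKernel_smul hv]
  refine hasFDerivAt_integral_comp_sub (φ := fun w => gaussKernel v w * f w)
    (φ' := fun w => gaussKernel v w • (f' w - (f w / v) • innerSL ℝ w)) hderiv
    ((continuous_gaussKernel v).smul (by fun_prop))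
    (norm_gaussKernel_smul_le (C := 2 * C) hv fun w => (hf w).trans ?_)
    (norm_gaussKernel_smul_le hv (norm_sub_div_smul_innerSL_le hv hf hf')) x
  nlinarith [mul_nonneg hC (sq_nonneg (‖w‖ - 1))]

lemma hasFDerivAt_gaussConv (hv : 0 < v) (x : E) :
    HasFDerivAt (gaussConv P v)
      (-(gaussConv P v x / v) • ∫ y, innerSL ℝ (x - y) ∂(gaussPosterior P v x)) x := by
  have h := hasFDerivAt_integral_gaussKernel_mul (P := P) (f := fun _ => 1) (f' := fun _ => 0)
    (C := 1) hv (fun w => hasFDerivAt_const 1 w) continuous_const (fun w => by simp)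
    (fun _ => by simp) x
  simp only [mul_one, zero_sub, integral_neg, integral_smul, smul_neg, smul_smul] at h
  rwa [neg_smul, div_eq_mul_one_div]

lemma fderiv_log_gaussConv_apply (hv : 0 < v) (x u : E) :
    fderiv ℝ (fun z => log (gaussConv P v z)) x u =
      -(∫ y, ⟪u, x - y⟫ ∂(gaussPosterior P v x)) / v := by
  have hpos := gaussConv_pos (P := P) hv x
  rw [((hasFDerivAt_gaussConv hv x).log hpos.ne').fderiv, smul_smul,
    smul_apply, integral_innerSL_gaussPosterior_apply hv, smul_eq_mul]
  field_simp

lemma integral_sub_div_smul_innerSL_gaussPosterior_apply (hv : 0 < v) {f : E → ℝ}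
    {f' : E → E →L[ℝ] ℝ} {C : ℝ} (hfc : Continuous f) (hf'c : Continuous f')
    (hf : ∀ w, ‖f w‖ ≤ C * (1 + ‖w‖)) (hf' : ∀ w, ‖f' w‖ ≤ C) (x u : E) :
    (∫ y, (f' (x - y) - (f (x - y) / v) • innerSL ℝ (x - y)) ∂(gaussPosterior P v x)) u =
      ∫ y, f' (x - y) u ∂(gaussPosterior P v x) -
        (∫ y, f (x - y) * ⟪u, x - y⟫ ∂(gaussPosterior P v x)) / v := by
  have hprob := isProbabilityMeasure_gaussPosterior (P := P) hv x
  have hf'int : Integrable (fun y => f' (x - y) u) (gaussPosterior P v x) :=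
    .of_bound (Continuous.aestronglyMeasurable (by fun_prop)) (C * ‖u‖)
      (.of_forall fun y => (f' (x - y)).le_of_opNorm_le (hf' _) u)
  have hmul : Integrable (fun y => f (x - y) * ⟪u, x - y⟫) (gaussPosterior P v x) :=
    (memLp_two_gaussPosterior hv hfc hf x).integrable_mul (memLp_two_inner_gaussPosterior hv x u)
  rw [ContinuousLinearMap.integral_apply (integrable_gaussPosterior
      (F := fun w => f' w - (f w / v) • innerSL ℝ w) hv (by fun_prop)
      (norm_sub_div_smul_innerSL_le hv hf hf') x),
    ← integral_div, ← integral_sub hf'int (hmul.div_const v)]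
  simp only [sub_apply, smul_apply, innerSL_apply_apply, smul_eq_mul, real_inner_comm,
    div_mul_eq_mul_div]

lemma fderiv_integral_gaussPosterior_apply (hv : 0 < v) {f : E → ℝ} {f' : E → E →L[ℝ] ℝ} {C : ℝ}
    (hff' : ∀ w, HasFDerivAt f (f' w) w) (hf'c : Continuous f')
    (hf : ∀ w, ‖f w‖ ≤ C * (1 + ‖w‖)) (hf' : ∀ w, ‖f' w‖ ≤ C) (x u : E) :
    fderiv ℝ (fun z => ∫ y, f (z - y) ∂(gaussPosterior P v z)) x u =
      ∫ y, f' (x - y) u ∂(gaussPosterior P v x) -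
        cov[fun y => f (x - y), fun y => ⟪u, x - y⟫; gaussPosterior P v x] / v := by
  have hpos := gaussConv_pos (P := P) hv x
  have hprob := isProbabilityMeasure_gaussPosterior (P := P) hv x
  have hfc : Continuous f := continuous_iff_continuousAt.2 fun w => (hff' w).continuousAt
  have hquot := ((hasDerivAt_inv hpos.ne').comp_hasFDerivAt x (hasFDerivAt_gaussConv hv x)).mul
    (hasFDerivAt_integral_gaussKernel_mul (P := P) hv hff' hf'c hf hf' x)
  have hmean : ∫ y, gaussKernel v (x - y) * f (x - y) ∂P =
      gaussConv P v x * ∫ y, f (x - y) ∂(gaussPosterior P v x) :=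
    integral_gaussKernel_smul hv x fun y => f (x - y)
  rw [(hquot.congr_of_eventuallyEq (.of_forall fun z => integral_gaussPosterior z _)).fderiv,
    covariance_eq_sub (memLp_two_gaussPosterior hv hfc hf x)
    (memLp_two_inner_gaussPosterior hv x u)]
  simp only [add_apply, smul_apply, smul_eq_mul, Pi.mul_apply, Function.comp_apply,
    integral_sub_div_smul_innerSL_gaussPosterior_apply hv hfc hf'c hf hf',
    integral_innerSL_gaussPosterior_apply hv, hmean]
  field_simp
  ring

lemma covariance_inner_sub_gaussPosterior [CompleteSpace E] (hv : 0 < v) (x u w : E) :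
    cov[fun y => ⟪u, x - y⟫, fun y => ⟪w, x - y⟫; gaussPosterior P v x] =
      covarianceBilin (gaussPosterior P v x) u w := by
  have hprob := isProbabilityMeasure_gaussPosterior (P := P) hv x
  have hid := memLp_two_id_gaussPosterior (P := P) hv x
  have hint (u : E) : Integrable (fun y => ⟪u, y⟫) (gaussPosterior P v x) :=
    ((innerSL ℝ u).comp_memLp' hid).integrable one_le_two
  simp_rw [covarianceBilin_apply_eq_cov hid, inner_sub_right]
  rw [covariance_const_sub_left (hint u), covariance_const_sub_right (hint w), neg_neg]

lemma fderiv_fderiv_log_gaussConv_apply [CompleteSpace E] (hv : 0 < v) (x u w : E) :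
    fderiv ℝ (fun z => fderiv ℝ (fun z => log (gaussConv P v z)) z u) x w =
      covarianceBilin (gaussPosterior P v x) u w / v ^ 2 - ⟪u, w⟫ / v := by
  have hprob := isProbabilityMeasure_gaussPosterior (P := P) hv x
  have hmean := fderiv_integral_gaussPosterior_apply (P := P) (f := fun y => ⟪u, y⟫)
    (f' := fun _ => innerSL ℝ u) (C := ‖u‖) hv (fun w => (innerSL ℝ u).hasFDerivAt)
    continuous_const (fun w => (norm_inner_le_norm u w).trans (by gcongr; linarith))
    (fun _ => (innerSL_apply_norm ℝ u).le) x w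
  have hscore : (fun z => fderiv ℝ (fun z => log (gaussConv P v z)) z u) =
      -v⁻¹ • fun z => ∫ y, ⟪u, z - y⟫ ∂(gaussPosterior P v z) := by
    funext z
    rw [fderiv_log_gaussConv_apply hv, Pi.smul_apply, smul_eq_mul]
    ring
  rw [hscore, fderiv_const_smul_field, Pi.smul_apply, smul_apply, hmean,
    covariance_inner_sub_gaussPosterior hv]
  simp only [innerSL_apply_apply, integral_const, probReal_univ, smul_eq_mul]
  ring

end Calculus

end GaussianSmoothing

section CovarianceMatrix

variable {E ι : Type*} [NormedAddCommGroup E] [InnerProductSpace ℝ E] [MeasurableSpace E]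
  [BorelSpace E] [Fintype ι]

/-- The covariance matrix of a measure `μ` with respect to an orthonormal basis. Like
`covarianceBilin`, it is `0` when `μ` has no second moment. -/
def covMatrix (b : OrthonormalBasis ι ℝ E) (μ : Measure E) : Matrix ι ι ℝ :=
  .of fun i j => covarianceBilin μ (b i) (b j)

lemma posSemidef_covMatrix (b : OrthonormalBasis ι ℝ E) (μ : Measure E) :
    (covMatrix b μ).PosSemidef := by
  classical
  have h : covMatrix b μ =
      LinearMap.BilinForm.toMatrix b.toBasis (covarianceBilin μ).toBilinForm := by
    ext i j
    simp [covMatrix, LinearMap.BilinForm.toMatrix_apply]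
  rw [h]
  exact (LinearMap.isPosSemidef_iff_posSemidef_toMatrix b.toBasis).1
    (LinearMap.BilinForm.isPosSemidef_iff.1 isPosSemidef_covarianceBilin)

variable [SecondCountableTopology E] [CompleteSpace E] {P : Measure E} [IsFiniteMeasure P]
  [NeZero P] {v : ℝ}

lemma trace_covMatrix_gaussPosterior_le (hv : 0 < v) (b : OrthonormalBasis ι ℝ E) (x : E) :
    (covMatrix b (gaussPosterior P v x)).trace ≤
      ∫ y, ‖x - y‖ ^ 2 ∂(gaussPosterior P v x) := by
  have hprob := isProbabilityMeasure_gaussPosterior (P := P) hv x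
  have hint (i : ι) : MemLp (fun y => ⟪b i, x - y⟫) 2 (gaussPosterior P v x) :=
    memLp_two_inner_gaussPosterior hv x (b i)
  calc (covMatrix b (gaussPosterior P v x)).trace
      = ∑ i, Var[fun y => ⟪b i, x - y⟫; gaussPosterior P v x] := by
        refine Finset.sum_congr rfl fun i _ => ?_
        rw [Matrix.diag_apply, covMatrix, Matrix.of_apply,
          ← covariance_inner_sub_gaussPosterior hv, covariance_self (hint i).1.aemeasurable]
    _ ≤ ∑ i, ∫ y, ⟪b i, x - y⟫ ^ 2 ∂(gaussPosterior P v x) :=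
        Finset.sum_le_sum fun i _ => variance_le_expectation_sq (hint i).1
    _ = ∫ y, ‖x - y‖ ^ 2 ∂(gaussPosterior P v x) := by
        rw [← integral_finsetSum _ fun i _ => (hint i).integrable_sq]
        simp_rw [b.sum_sq_inner_right]

end CovarianceMatrix

section Hessian

open scoped Matrix.Norms.Frobenius

variable {d : ℕ} {σ : ℝ} {P : Measure (Vec d)}

lemma hessFrob_eq_frobenius_norm (f : Vec d → ℝ) (x : Vec d) :
    hessFrob f x = ‖Matrix.of (hessEntry f x)‖ := by
  rw [hessFrob, Matrix.frobenius_norm_def, sqrt_eq_rpow]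
  simp

lemma abs_hessFrob (f : Vec d → ℝ) (x : Vec d) : |hessFrob f x| = hessFrob f x :=
  abs_of_nonneg (sqrt_nonneg _)

lemma hessFrob_dim_zero (f : Vec 0 → ℝ) : hessFrob f = 0 := by
  funext x
  simp [hessFrob]

lemma measurable_hessFrob (f : Vec d → ℝ) : Measurable (hessFrob f) := by
  unfold hessFrob hessEntry
  fun_prop

lemma perturbDensity_eq (P : Measure (Vec d)) (σ : ℝ) (x : Vec d) :
    perturbDensity d P σ x = (2 * π * σ ^ 2) ^ (-(d : ℝ) / 2) * gaussConv P (σ ^ 2) x :=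
  rfl

variable [IsFiniteMeasure P] [NeZero P]

lemma of_hessEntry_log_perturbDensity (hσ : 0 < σ) (x : Vec d) :
    Matrix.of (hessEntry (fun z => log (perturbDensity d P σ z)) x) =
      ((σ ^ 2) ^ 2)⁻¹ •
          covMatrix (EuclideanSpace.basisFun (Fin d) ℝ) (gaussPosterior P (σ ^ 2) x) -
        (σ ^ 2)⁻¹ • (1 : Matrix (Fin d) (Fin d) ℝ) := by
  have hv : 0 < σ ^ 2 := by positivity
  have hlog : (fun z => log (perturbDensity d P σ z)) =
      fun z => log ((2 * π * σ ^ 2) ^ (-(d : ℝ) / 2)) + log (gaussConv P (σ ^ 2) z) := by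
    funext z
    rw [perturbDensity_eq, log_mul (by positivity) (gaussConv_pos hv z).ne']
  ext i j
  simp only [hessEntry, hlog, Matrix.of_apply, fderiv_const_add]
  rw [fderiv_fderiv_log_gaussConv_apply hv, covarianceBilin_comm, real_inner_comm]
  simp [covMatrix, Matrix.one_apply, div_eq_inv_mul, EuclideanSpace.inner_single_left]

lemma hessFrob_log_perturbDensity_le (hσ : 0 < σ) (x : Vec d) :
    hessFrob (fun z => log (perturbDensity d P σ z)) x ≤
      √d / σ ^ 2 + (∫ y, ‖x - y‖ ^ 2 ∂(gaussPosterior P (σ ^ 2) x)) / σ ^ 4 := by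
  have hcov := (frobenius_norm_le_trace (posSemidef_covMatrix _ _)).trans
    (trace_covMatrix_gaussPosterior_le (P := P) (pow_pos hσ 2)
      (EuclideanSpace.basisFun (Fin d) ℝ) x)
  have hone : ‖(1 : Matrix (Fin d) (Fin d) ℝ)‖ = √d := by
    rw [← coe_nnnorm, Matrix.frobenius_nnnorm_one]
    simp
  rw [hessFrob_eq_frobenius_norm, of_hessEntry_log_perturbDensity hσ]
  refine (norm_sub_le _ _).trans ?_
  rw [norm_smul, norm_smul, hone, norm_inv, norm_inv, norm_of_nonneg (by positivity),
    norm_of_nonneg (by positivity), ← pow_mul, add_comm, div_eq_inv_mul, div_eq_inv_mul]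
  gcongr

end Hessian

section WithDensity

open scoped ENNReal Measure

open Module (finrank)

lemma lintegral_lintegral_sub {G : Type*} [AddGroup G] [MeasurableSpace G] [MeasurableSub₂ G]
    [MeasurableAdd G] {P μ : Measure G} [IsProbabilityMeasure P] [SFinite μ]
    [μ.IsAddRightInvariant] {f : G → ℝ≥0∞} (hf : Measurable f) :
    ∫⁻ x, ∫⁻ y, f (x - y) ∂P ∂μ = ∫⁻ w, f w ∂μ := by
  rw [lintegral_lintegral_swap (by fun_prop)]
  simp only [lintegral_sub_right_eq_self, lintegral_const, measure_univ, mul_one]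

lemma conv_withDensity {G : Type*} [AddCommGroup G] [MeasurableSpace G] [MeasurableAdd₂ G]
    [MeasurableNeg G] {P μ : Measure G} [SFinite P] [SFinite μ] [μ.IsAddRightInvariant]
    {f : G → ℝ≥0∞} (hf : Measurable f) :
    P ∗ μ.withDensity f = μ.withDensity fun x => ∫⁻ y, f (x - y) ∂P := by
  have hfsub : Measurable fun q : G × G => f (q.1 - q.2) := by fun_prop
  refine Measure.ext_of_lintegral _ fun g hg => ?_
  calc ∫⁻ x, g x ∂(P ∗ μ.withDensity f)
      = ∫⁻ y, ∫⁻ w, f w * g (y + w) ∂μ ∂P := by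
        rw [Measure.lintegral_conv hg]
        refine lintegral_congr fun y => ?_
        exact lintegral_withDensity_eq_lintegral_mul μ hf (by fun_prop)
    _ = ∫⁻ y, ∫⁻ x, f (x - y) * g x ∂μ ∂P := by
        refine lintegral_congr fun y => ?_
        rw [← lintegral_sub_right_eq_self _ y]
        simp only [add_sub_cancel]
    _ = ∫⁻ x, (∫⁻ y, f (x - y) ∂P) * g x ∂μ := by
        rw [lintegral_lintegral_swap (by fun_prop)]
        exact lintegral_congr fun x => lintegral_mul_const _ (by fun_prop)
    _ = ∫⁻ x, g x ∂(μ.withDensity fun x => ∫⁻ y, f (x - y) ∂P) :=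
        (lintegral_withDensity_eq_lintegral_mul μ hfsub.lintegral_prod_right' hg).symm

lemma map_smul_withDensity {E : Type*} [NormedAddCommGroup E] [NormedSpace ℝ E]
    [FiniteDimensional ℝ E] [MeasurableSpace E] [BorelSpace E] {μ : Measure E}
    [μ.IsAddHaarMeasure] {r : ℝ} (hr : r ≠ 0) {f : E → ℝ≥0∞} (hf : Measurable f) :
    (μ.withDensity f).map (r • ·) =
      μ.withDensity fun x => ENNReal.ofReal |(r ^ finrank ℝ E)⁻¹| * f (r⁻¹ • x) := by
  refine Measure.ext_of_lintegral _ fun g hg => ?_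
  have hscale : Measurable fun x => f (r⁻¹ • x) * g x := by fun_prop
  calc ∫⁻ x, g x ∂((μ.withDensity f).map (r • ·))
      = ∫⁻ x, f (r⁻¹ • r • x) * g (r • x) ∂μ := by
        rw [lintegral_map hg (by fun_prop),
          lintegral_withDensity_eq_lintegral_mul μ hf (by fun_prop)]
        simp_rw [inv_smul_smul₀ hr, Pi.mul_apply]
    _ = ∫⁻ x, ENNReal.ofReal |(r ^ finrank ℝ E)⁻¹| * (f (r⁻¹ • x) * g x) ∂μ := by
        rw [← lintegral_map hscale (by fun_prop : Measurable fun x : E => r • x),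
          Measure.map_addHaar_smul μ hr, lintegral_smul_measure, smul_eq_mul,
          lintegral_const_mul _ hscale]
    _ = ∫⁻ x, g x ∂(μ.withDensity fun x =>
          ENNReal.ofReal |(r ^ finrank ℝ E)⁻¹| * f (r⁻¹ • x)) := by
        rw [lintegral_withDensity_eq_lintegral_mul μ (by fun_prop) hg]
        simp only [Pi.mul_apply, mul_assoc]

end WithDensity

section GaussianMeasure

variable {d : ℕ} {v : ℝ}

lemma gaussDensity_zero_eq (d : ℕ) (v : ℝ) (w : Vec d) :
    gaussDensity d 0 v w = (2 * π * v) ^ (-(d : ℝ) / 2) * gaussKernel v w := by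
  rw [gaussDensity, sub_zero, gaussKernel]

lemma continuous_gaussDensity (d : ℕ) (m : Vec d) (v : ℝ) : Continuous (gaussDensity d m v) := by
  unfold gaussDensity
  fun_prop

lemma map_smul_gaussMeasure_zero {σ : ℝ} (hσ : 0 < σ) (hv : 0 ≤ v) :
    (gaussMeasure d 0 v).map (σ • ·) = gaussMeasure d 0 (σ ^ 2 * v) := by
  rw [gaussMeasure, gaussMeasure,
    map_smul_withDensity hσ.ne' (continuous_gaussDensity d 0 v).measurable.ennreal_ofReal]
  congr 1 with x
  rw [← ENNReal.ofReal_mul (abs_nonneg _), finrank_euclideanSpace_fin, abs_of_pos (by positivity)]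
  congr 1
  have hconst : (2 * π * (σ ^ 2 * v)) ^ (-(d : ℝ) / 2) =
      (σ ^ d)⁻¹ * (2 * π * v) ^ (-(d : ℝ) / 2) := by
    rw [mul_left_comm, mul_rpow (by positivity) (by positivity), ← rpow_natCast σ 2,
      ← rpow_mul hσ.le, ← rpow_natCast σ d, ← rpow_neg hσ.le]
    congr 2
    push_cast
    ring
  rw [gaussDensity, gaussDensity, hconst, sub_zero, sub_zero, norm_smul, norm_inv,
    norm_of_nonneg hσ.le, mul_assoc (σ ^ d)⁻¹]
  congr 3
  field_simp

lemma lintegral_exp_norm_sq_gaussMeasure (hv : 0 < v) {a : ℝ} (ha : 2 * a * v < 1) :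
    ∫⁻ w, ENNReal.ofReal (exp (a * ‖w‖ ^ 2)) ∂(gaussMeasure d 0 v) =
      ENNReal.ofReal ((1 - 2 * a * v) ^ (-(d : ℝ) / 2)) := by
  have hpos : 0 < 1 - 2 * a * v := sub_pos.2 ha
  have hb : 0 < (1 - 2 * a * v) / (2 * v) := by positivity
  have hint : ∫ w : Vec d, exp (-((1 - 2 * a * v) / (2 * v)) * ‖w‖ ^ 2) =
      (2 * π * v / (1 - 2 * a * v)) ^ ((d : ℝ) / 2) := by
    rw [GaussianFourier.integral_rexp_neg_mul_sq_norm hb, finrank_euclideanSpace_fin]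
    congr 1
    field_simp
  have hmul (w : Vec d) : gaussDensity d 0 v w * exp (a * ‖w‖ ^ 2) =
      (2 * π * v) ^ (-(d : ℝ) / 2) * exp (-((1 - 2 * a * v) / (2 * v)) * ‖w‖ ^ 2) := by
    rw [gaussDensity, mul_assoc, ← exp_add, sub_zero]
    congr 2
    field_simp
    ring
  calc ∫⁻ w, ENNReal.ofReal (exp (a * ‖w‖ ^ 2)) ∂(gaussMeasure d 0 v)
      = ∫⁻ w : Vec d, ENNReal.ofReal ((2 * π * v) ^ (-(d : ℝ) / 2) *
          exp (-((1 - 2 * a * v) / (2 * v)) * ‖w‖ ^ 2)) := by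
        rw [gaussMeasure, lintegral_withDensity_eq_lintegral_mul _
          (continuous_gaussDensity d 0 v).measurable.ennreal_ofReal (by fun_prop)]
        refine lintegral_congr fun w => ?_
        rw [Pi.mul_apply, ← ENNReal.ofReal_mul' (exp_pos _).le, hmul]
    _ = ENNReal.ofReal ((2 * π * v) ^ (-(d : ℝ) / 2) *
          (2 * π * v / (1 - 2 * a * v)) ^ ((d : ℝ) / 2)) := by
        rw [← ofReal_integral_eq_lintegral_ofReal _ (.of_forall fun w => by positivity),
          integral_const_mul, hint]
        refine (Integrable.of_integral_ne_zero ?_).const_mul _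
        rw [hint]
        positivity
    _ = ENNReal.ofReal ((1 - 2 * a * v) ^ (-(d : ℝ) / 2)) := by
        rw [div_rpow (by positivity) hpos.le, neg_div, rpow_neg (by positivity), rpow_neg hpos.le]
        congr 1
        field_simp

lemma isProbabilityMeasure_gaussMeasure_zero (hv : 0 < v) :
    IsProbabilityMeasure (gaussMeasure d 0 v) := by
  have h := lintegral_exp_norm_sq_gaussMeasure (d := d) (a := 0) hv (by norm_num)
  exact ⟨by simpa using h⟩

end GaussianMeasure

section PerturbLaw

open scoped ENNReal Measure

variable {d : ℕ} {σ : ℝ} {P : Measure (Vec d)} [IsProbabilityMeasure P]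

lemma perturbLaw_eq_conv (hσ : 0 < σ) : perturbLaw d P σ = P ∗ gaussMeasure d 0 (σ ^ 2) := by
  have hstd : (volume.withDensity fun x : Vec d =>
      ENNReal.ofReal ((2 * π) ^ (-(d : ℝ) / 2) * exp (-‖x‖ ^ 2 / 2))) = gaussMeasure d 0 1 := by
    simp only [gaussMeasure, gaussDensity, mul_one, sub_zero]
  have hprob := isProbabilityMeasure_gaussMeasure_zero (d := d) one_pos
  rw [perturbLaw, hstd, Measure.conv, ← mul_one (σ ^ 2),
    ← map_smul_gaussMeasure_zero hσ zero_le_one]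
  nth_rw 2 [← Measure.map_id (μ := P)]
  rw [Measure.map_prod_map _ _ measurable_id (measurable_const_smul σ),
    Measure.map_map measurable_add (by fun_prop)]
  rfl

lemma isProbabilityMeasure_perturbLaw (hσ : 0 < σ) : IsProbabilityMeasure (perturbLaw d P σ) := by
  have hprob := isProbabilityMeasure_gaussMeasure_zero (d := d) (pow_pos hσ 2)
  rw [perturbLaw_eq_conv hσ]
  infer_instance

lemma perturbLaw_eq_withDensity (hσ : 0 < σ) :
    perturbLaw d P σ = volume.withDensity fun x => ENNReal.ofReal (perturbDensity d P σ x) := by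
  rw [perturbLaw_eq_conv hσ, gaussMeasure,
    conv_withDensity (continuous_gaussDensity d 0 (σ ^ 2)).measurable.ennreal_ofReal]
  congr 1 with x
  simp_rw [gaussDensity_zero_eq]
  rw [perturbDensity_eq, gaussConv, ← integral_const_mul, ofReal_integral_eq_lintegral_ofReal
      ((integrable_gaussKernel (pow_pos hσ 2) x).const_mul _)
      (.of_forall fun y => mul_nonneg (by positivity) (gaussKernel_pos _ _).le)]

lemma continuous_perturbDensity (hσ : 0 < σ) : Continuous (perturbDensity d P σ) :=
  continuous_iff_continuousAt.2 fun x =>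
    ((hasFDerivAt_gaussConv (pow_pos hσ 2) x).continuousAt).const_mul _

lemma ofReal_perturbDensity_mul_lintegral_gaussPosterior (hσ : 0 < σ) (x : Vec d)
    (g : Vec d → ℝ≥0∞) :
    ENNReal.ofReal (perturbDensity d P σ x) * ∫⁻ y, g y ∂(gaussPosterior P (σ ^ 2) x) =
      ∫⁻ y, ENNReal.ofReal (gaussDensity d 0 (σ ^ 2) (x - y)) * g y ∂P := by
  rw [gaussPosterior, lintegral_tilted, ← lintegral_const_mul' _ _ ENNReal.ofReal_ne_top]
  refine lintegral_congr fun y => ?_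
  have hpos := gaussConv_pos (P := P) (pow_pos hσ 2) x
  change _ * (ENNReal.ofReal (gaussKernel (σ ^ 2) (x - y) / gaussConv P (σ ^ 2) x) * g y) = _
  rw [← mul_assoc, ← ENNReal.ofReal_mul (by rw [perturbDensity_eq]; positivity), perturbDensity_eq,
    gaussDensity_zero_eq, mul_assoc, mul_div_cancel₀ _ hpos.ne']

lemma lintegral_lintegral_gaussPosterior_sub (hσ : 0 < σ) {f : Vec d → ℝ≥0∞} (hf : Measurable f) :
    ∫⁻ x, ∫⁻ y, f (x - y) ∂(gaussPosterior P (σ ^ 2) x) ∂(perturbLaw d P σ) =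
      ∫⁻ w, f w ∂(gaussMeasure d 0 (σ ^ 2)) := by
  have hγ : Measurable fun w => ENNReal.ofReal (gaussDensity d 0 (σ ^ 2) w) :=
    (continuous_gaussDensity d 0 (σ ^ 2)).measurable.ennreal_ofReal
  calc ∫⁻ x, ∫⁻ y, f (x - y) ∂(gaussPosterior P (σ ^ 2) x) ∂(perturbLaw d P σ)
      = ∫⁻ x, ∫⁻ y, ENNReal.ofReal (gaussDensity d 0 (σ ^ 2) (x - y)) * f (x - y) ∂P := by
        rw [perturbLaw_eq_withDensity hσ, lintegral_withDensity_eq_lintegral_mul_non_measurable _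
          (continuous_perturbDensity hσ).measurable.ennreal_ofReal
          (.of_forall fun x => ENNReal.ofReal_lt_top)]
        exact lintegral_congr fun x => ofReal_perturbDensity_mul_lintegral_gaussPosterior hσ x _
    _ = ∫⁻ w, ENNReal.ofReal (gaussDensity d 0 (σ ^ 2) w) * f w :=
        lintegral_lintegral_sub (hγ.mul hf)
    _ = ∫⁻ w, f w ∂(gaussMeasure d 0 (σ ^ 2)) := by
        exact (lintegral_withDensity_eq_lintegral_mul _ hγ hf).symm

end PerturbLaw

section ExponentialMoment

variable {d : ℕ} {σ : ℝ} {P : Measure (Vec d)} [IsProbabilityMeasure P]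

lemma exp_quarter_mul_one_sub_rpow_le_two (hd : 1 ≤ d) :
    exp (1 / 4) * (1 - 1 / (2 * d)) ^ (-(d : ℝ) / 2) ≤ 2 := by
  have hd' : (1 : ℝ) ≤ d := by exact_mod_cast hd
  have hhalf : 1 / (2 * (d : ℝ)) ≤ 1 / 2 := by gcongr; linarith
  have hpos : 0 < 1 - 1 / (2 * (d : ℝ)) := by linarith
  have hbernoulli : 1 / 2 ≤ (1 - 1 / (2 * (d : ℝ))) ^ d := by
    have h := one_add_mul_le_pow (a := -(1 / (2 * (d : ℝ)))) (by linarith) d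
    rwa [show 1 + (d : ℝ) * -(1 / (2 * d)) = 1 / 2 by field_simp; norm_num, ← sub_eq_add_neg] at h
  have hexp : exp (1 / 2) ≤ 2 := by
    refine abs_le_of_sq_le_sq' ?_ zero_le_two |>.2
    rw [← exp_nat_mul]
    norm_num
    linarith [exp_one_lt_three]
  refine abs_le_of_sq_le_sq' ?_ zero_le_two |>.2
  calc (exp (1 / 4) * (1 - 1 / (2 * d)) ^ (-(d : ℝ) / 2)) ^ 2
      = exp (1 / 2) * ((1 - 1 / (2 * (d : ℝ))) ^ d)⁻¹ := by
        rw [mul_pow, ← exp_nat_mul, ← rpow_natCast (_ ^ _), ← rpow_mul hpos.le, ← rpow_natCast _ d,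
          ← rpow_neg hpos.le]
        push_cast
        norm_num
    _ ≤ 2 * (1 / 2)⁻¹ := by gcongr
    _ = 2 ^ 2 := by norm_num

lemma hessFrob_log_perturbDensity_div_le (hd : 1 ≤ d) (hσ : 0 < σ) (x : Vec d) :
    hessFrob (fun z => log (perturbDensity d P σ z)) x / (4 * d / σ ^ 2) ≤
      1 / 4 + ∫ y, 1 / (4 * d * σ ^ 2) * ‖x - y‖ ^ 2 ∂(gaussPosterior P (σ ^ 2) x) := by
  have hd' : (1 : ℝ) ≤ d := by exact_mod_cast hd
  rw [integral_const_mul, div_le_iff₀ (by positivity)]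
  refine (hessFrob_log_perturbDensity_le hσ x).trans ?_
  have hsqrt : √(d : ℝ) ≤ d := sqrt_le_self_iff.2 (.inr hd')
  calc √d / σ ^ 2 + (∫ y, ‖x - y‖ ^ 2 ∂(gaussPosterior P (σ ^ 2) x)) / σ ^ 4
      ≤ d / σ ^ 2 + (∫ y, ‖x - y‖ ^ 2 ∂(gaussPosterior P (σ ^ 2) x)) / σ ^ 4 := by gcongr
    _ = _ := by field_simp

lemma lintegral_exp_hessFrob_le_two (hd : 1 ≤ d) (hσ : 0 < σ) :
    ∫⁻ x, ENNReal.ofReal (exp (hessFrob (fun z => log (perturbDensity d P σ z)) x /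
      (4 * d / σ ^ 2))) ∂(perturbLaw d P σ) ≤ 2 := by
  have hd' : (1 : ℝ) ≤ d := by exact_mod_cast hd
  set a : ℝ := 1 / (4 * d * σ ^ 2) with ha
  calc ∫⁻ x, ENNReal.ofReal (exp (hessFrob (fun z => log (perturbDensity d P σ z)) x /
          (4 * d / σ ^ 2))) ∂(perturbLaw d P σ)
      ≤ ∫⁻ x, ENNReal.ofReal (exp (1 / 4)) * ∫⁻ y, ENNReal.ofReal (exp (a * ‖x - y‖ ^ 2))
          ∂(gaussPosterior P (σ ^ 2) x) ∂(perturbLaw d P σ) := by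
        gcongr with x
        have hprob := isProbabilityMeasure_gaussPosterior (P := P) (pow_pos hσ 2) x
        grw [hessFrob_log_perturbDensity_div_le hd hσ x, exp_add, ENNReal.ofReal_mul (exp_pos _).le,
          ofReal_exp_integral_le_lintegral]
        exact integrable_gaussPosterior (F := fun w => a * ‖w‖ ^ 2) (C := a) (pow_pos hσ 2)
          (by fun_prop) (fun w => by rw [norm_of_nonneg (by positivity)]; gcongr; linarith) x
    _ = ENNReal.ofReal (exp (1 / 4)) * ∫⁻ w, ENNReal.ofReal (exp (a * ‖w‖ ^ 2))
          ∂(gaussMeasure d 0 (σ ^ 2)) := by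
        rw [lintegral_const_mul' _ _ ENNReal.ofReal_ne_top,
          lintegral_lintegral_gaussPosterior_sub hσ
            (f := fun w => ENNReal.ofReal (exp (a * ‖w‖ ^ 2))) (by fun_prop)]
    _ = ENNReal.ofReal (exp (1 / 4) * (1 - 1 / (2 * d)) ^ (-(d : ℝ) / 2)) := by
        have hav : 2 * a * σ ^ 2 = 1 / (2 * d) := by rw [ha]; field_simp; norm_num
        rw [lintegral_exp_norm_sq_gaussMeasure (pow_pos hσ 2),
          ← ENNReal.ofReal_mul (exp_pos _).le, hav]
        rw [hav, div_lt_one (by positivity)]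
        linarith
    _ ≤ 2 := by
        rw [← ENNReal.ofReal_ofNat]
        exact ENNReal.ofReal_le_ofReal (exp_quarter_mul_one_sub_rpow_le_two hd)

lemma integrable_exp_abs_hessFrob (hd : 1 ≤ d) (hσ : 0 < σ) :
    Integrable (fun x => exp (|hessFrob (fun z => log (perturbDensity d P σ z)) x| /
      (4 * d / σ ^ 2))) (perturbLaw d P σ) := by
  simp only [abs_hessFrob]
  refine (lintegral_ofReal_ne_top_iff_integrable ?_ (.of_forall fun x => (exp_pos _).le)).1
    (ne_top_of_le_ne_top ENNReal.ofNat_ne_top (lintegral_exp_hessFrob_le_two hd hσ))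
  exact ((measurable_hessFrob _).div_const _).exp.aestronglyMeasurable

lemma integral_exp_abs_hessFrob_le_two (hd : 1 ≤ d) (hσ : 0 < σ) :
    ∫ x, exp (|hessFrob (fun z => log (perturbDensity d P σ z)) x| / (4 * d / σ ^ 2))
      ∂(perturbLaw d P σ) ≤ 2 := by
  rw [integral_eq_lintegral_of_nonneg_ae (.of_forall fun x => (exp_pos _).le)
    (integrable_exp_abs_hessFrob hd hσ).1]
  simp only [abs_hessFrob]
  exact ENNReal.toReal_mono ENNReal.ofNat_ne_top (lintegral_exp_hessFrob_le_two hd hσ)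

end ExponentialMoment

/-- Lemma `hessian-moment`: sub-exponential bound on the Frobenius norm of
the Hessian `∇²log p_σ` of a Gaussian perturbation. -/
theorem statement8 :
    ∃ C : ℝ, 0 < C ∧
      ∀ (d : ℕ) (σ : ℝ) (P : Measure (Vec d)),
        IsProbabilityMeasure P → 0 < σ →
        (∀ p : ℕ, 1 ≤ p →
          (∫ x, (hessFrob (fun z => Real.log (perturbDensity d P σ z)) x) ^ p
              ∂(perturbLaw d P σ)) ≤
            (C * p * d / σ ^ 2) ^ p) ∧
        psi1Norm (perturbLaw d P σ)
            (fun x => hessFrob (fun z => Real.log (perturbDensity d P σ z)) x) ≤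
          C * d / σ ^ 2 := by
  refine ⟨8, by norm_num, fun d σ P hP hσ => ?_⟩
  obtain rfl | hd := d.eq_zero_or_pos
  · have hprob := isProbabilityMeasure_perturbLaw (P := P) hσ
    rw [hessFrob_dim_zero]
    refine ⟨fun p hp => ?_, psi1Norm_zero.trans_le (by simp)⟩
    simp [zero_pow (Nat.one_le_iff_ne_zero.1 hp)]
  · have ht : 0 < 4 * d / σ ^ 2 := by positivity
    have hint := integrable_exp_abs_hessFrob (P := P) hd hσ
    have hle := integral_exp_abs_hessFrob_le_two (P := P) hd hσ
    refine ⟨fun p hp => ?_, (psi1Norm_le_of_integral_exp_le ht hle).trans (by gcongr; norm_num)⟩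
    have hmom := integral_abs_pow_le_of_integral_exp_le_two ht hint hle hp
    simp only [abs_hessFrob] at hmom
    exact hmom.trans_eq (by ring)

end DiffusionKL
end
end
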